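/- If P and Q are mem-basic forms over A and CP_cl ⊢ P = Q, then α̃(P) = α̃(Q). -/

import Mathlib

/-!
Short-circuit evaluation of an expression under a fixed assignment `f` of truth values to the
atoms yields a truth value (`val`) and the set of atoms that are actually inspected (`trace`).
All axioms of CP_cl preserve both (`DerCl.sound`), since (CPmem) only removes the re-evaluation of
an expression already evaluated and (CL2) only swaps the order of two evaluations.
For a mem-basic form no atom repeats along a path, so every path is followed by some assignment,
and the shared alphabet is exactly the intersection of the traces over all assignments
(`mem_sha_iff`). Hence the shared alphabet is invariant under derivability.
-/

/-- Conditional expressions over a set `A` of atoms: constants T, F, atoms, and the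
ternary conditional `cond P Q R` read `P ◁ Q ▷ R` ("if Q then P else R"). -/
inductive Expr (A : Type) : Type
  | T : Expr A
  | F : Expr A
  | atom : A → Expr A
  | cond : Expr A → Expr A → Expr A → Expr A

namespace Expr

/-- Derivability from the axiom system CP_cl = CP + (CPmem) + (CL2). -/
inductive DerCl {A : Type} : Expr A → Expr A → Prop
  | refl (P : Expr A) : DerCl P P
  | symm {P Q : Expr A} : DerCl P Q → DerCl Q P
  | trans {P Q R : Expr A} : DerCl P Q → DerCl Q R → DerCl P R
  | congr {P P' Q Q' R R' : Expr A} :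
      DerCl P P' → DerCl Q Q' → DerCl R R' →
      DerCl (cond P Q R) (cond P' Q' R')
  | cp1 (x y : Expr A) : DerCl (cond x T y) x
  | cp2 (x y : Expr A) : DerCl (cond x F y) y
  | cp3 (x : Expr A) : DerCl (cond T x F) x
  | cp4 (x y z u v : Expr A) :
      DerCl (cond x (cond y z u) v) (cond (cond x y v) z (cond x u v))
  | cpmem (x y z u v w : Expr A) :
      DerCl (cond x y (cond z u (cond v y w))) (cond x y (cond z u w))
  | cl2 (x y z u v w : Expr A) :
      DerCl (cond (cond x y z) u (cond v y w)) (cond (cond x u v) y (cond z u w))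

/-- The set of atoms occurring in a conditional expression. -/
def atoms {A : Type} [DecidableEq A] : Expr A → Finset A
  | T => ∅
  | F => ∅
  | atom a => {a}
  | cond P Q R => atoms P ∪ atoms Q ∪ atoms R

/-- Mem-basic forms. -/
inductive IsMBF {A : Type} [DecidableEq A] : Expr A → Prop
  | T : IsMBF T
  | F : IsMBF F
  | cond {P Q : Expr A} (a : A) : IsMBF P → IsMBF Q →
      a ∉ atoms P → a ∉ atoms Q → IsMBF (cond P (atom a) Q)

/-- The shared alphabet α̃ of a basic form. -/
def sha {A : Type} [DecidableEq A] : Expr A → Finset A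
  | cond P (atom a) Q => insert a (sha P ∩ sha Q)
  | _ => ∅

end Expr

namespace Expr

/-- Truth value of an expression under the assignment `f`. -/
def val {A : Type} (f : A → Bool) : Expr A → Bool
  | T => true
  | F => false
  | atom a => f a
  | cond P Q R => if val f Q then val f P else val f R

/-- Set of atoms inspected by the short-circuit evaluation of an expression under `f`. -/
def trace {A : Type} [DecidableEq A] (f : A → Bool) : Expr A → Finset A
  | T => ∅
  | F => ∅
  | atom a => {a}
  | cond P Q R => trace f Q ∪ if val f Q then trace f P else trace f R

theorem DerCl.sound {A : Type} [DecidableEq A] (f : A → Bool) {P Q : Expr A} (h : DerCl P Q) :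
    val f P = val f Q ∧ trace f P = trace f Q := by
  induction h with
  | refl P => exact ⟨rfl, rfl⟩
  | symm _ ih => exact ⟨ih.1.symm, ih.2.symm⟩
  | trans _ _ ih₁ ih₂ => exact ⟨ih₁.1.trans ih₂.1, ih₁.2.trans ih₂.2⟩
  | congr _ _ _ ih₁ ih₂ ih₃ => simp [val, trace, ih₁, ih₂, ih₃]
  | cp1 x y => simp [val, trace]
  | cp2 x y => simp [val, trace]
  | cp3 x => simp [val, trace]
  | cp4 x y z u v => cases hz : val f z <;> simp [val, trace, hz, Finset.union_assoc]
  | cpmem x y z u v w =>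
    cases hy : val f y <;> cases hu : val f u <;> simp [val, trace, hy, hu]
    -- the remaining case is `y`, `u` both false, where the trace of `y` is collected twice
    ext a
    simp only [Finset.mem_union]
    tauto
  | cl2 x y z u v w =>
    cases hy : val f y <;> cases hu : val f u <;>
      simp [val, trace, hy, hu, Finset.union_left_comm]

theorem val_trace_update {A : Type} [DecidableEq A] (f : A → Bool) (a : A) (b : Bool)
    (P : Expr A) (h : a ∉ atoms P) :
    val (Function.update f a b) P = val f P ∧ trace (Function.update f a b) P = trace f P := by
  induction P with
  | T => exact ⟨rfl, rfl⟩
  | F => exact ⟨rfl, rfl⟩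
  | atom c =>
    have hc : c ≠ a := by
      rintro rfl
      simp [atoms] at h
    simp [val, trace, hc]
  | cond P Q R ihP ihQ ihR =>
    simp only [atoms, Finset.mem_union, not_or] at h
    simp [val, trace, ihP h.1.1, ihQ h.1.2, ihR h.2]

/-- The shared alphabet of a mem-basic form consists of the atoms inspected under every
assignment. -/
theorem mem_sha_iff {A : Type} [DecidableEq A] {P : Expr A} (hP : IsMBF P) (c : A) :
    c ∈ sha P ↔ ∀ f, c ∈ trace f P := by
  induction hP with
  | T => simp [sha, trace]
  | F => simp [sha, trace]
  | @cond P Q a _ _ haP haQ ihP ihQ =>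
    simp only [sha, trace, val, Finset.mem_insert, Finset.mem_inter, ihP, ihQ, Finset.mem_union,
      Finset.mem_singleton]
    constructor
    · rintro (h | ⟨h₁, h₂⟩) f
      · exact Or.inl h
      · right
        by_cases hf : f a = true <;> simp [hf, h₁ f, h₂ f]
    · intro h
      refine or_iff_not_imp_left.2 fun hc => ⟨fun f => ?_, fun f => ?_⟩
      -- since `a` does not occur in the branches, resetting it selects a branch
      -- without changing the trace there
      · simpa [hc, (val_trace_update f a true P haP).2] using h (Function.update f a true)
      · simpa [hc, (val_trace_update f a false Q haQ).2] using h (Function.update f a false)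

end Expr

open Expr in
/-- If P and Q are mem-basic forms over A and CP_cl ⊢ P = Q,
then α̃(P) = α̃(Q). -/
theorem stmt_2 {A : Type} [DecidableEq A] {P Q : Expr A}
    (hP : IsMBF P) (hQ : IsMBF Q) (h : DerCl P Q) :
    sha P = sha Q := by
  ext c
  simp only [mem_sha_iff hP, mem_sha_iff hQ, fun f => (h.sound f).2]
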